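/- Let H be a graph with k ≥ 1 edges, no isolated vertices, and vertex cover number τ = τ(H). Then there exists an H-good graph with at most (τ+1)·k edges. -/

import Mathlib

open SimpleGraph

/-- A proper edge coloring of `G`: adjacent (distinct, vertex-sharing) edges get
different colors. -/
def IsProperEdgeColoring {V : Type*} (G : SimpleGraph V) (c : Sym2 V → ℕ) : Prop :=
  ∀ e₁ ∈ G.edgeSet, ∀ e₂ ∈ G.edgeSet, e₁ ≠ e₂ → (∃ v, v ∈ e₁ ∧ v ∈ e₂) → c e₁ ≠ c e₂

/-- `G` contains a rainbow copy of `H` with respect to the edge coloring `c`: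
there is an injective graph homomorphism `H → G` whose image edges receive
pairwise distinct colors. -/
def HasRainbowCopy {V W : Type*} (G : SimpleGraph V) (H : SimpleGraph W) (c : Sym2 V → ℕ) : Prop :=
  ∃ f : H →g G, Function.Injective f ∧
    ∀ e₁ ∈ H.edgeSet, ∀ e₂ ∈ H.edgeSet, c (Sym2.map f e₁) = c (Sym2.map f e₂) → e₁ = e₂

/-- `G → H`: every proper edge coloring of `G` contains a rainbow copy of `H`. -/
def ArrowsTo {V W : Type*} (G : SimpleGraph V) (H : SimpleGraph W) : Prop :=
  ∀ c : Sym2 V → ℕ, IsProperEdgeColoring G c → HasRainbowCopy G H c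

/-- The size anti-Ramsey number: the minimum number of edges of a (finite) graph
`G` with `G → H`. -/
noncomputable def ARs {W : Type*} (H : SimpleGraph W) : ℕ :=
  sInf {m | ∃ (n : ℕ) (G : SimpleGraph (Fin n)), ArrowsTo G H ∧ G.edgeSet.ncard = m}

/-- The local anti-Ramsey number: the minimum `n` such that `K_n → H`. -/
noncomputable def ARloc {W : Type*} (H : SimpleGraph W) : ℕ :=
  sInf {n | ArrowsTo (⊤ : SimpleGraph (Fin n)) H}

/-- The vertex cover number of `H`: the minimum size of a set of vertices
meeting every edge of `H`. -/
noncomputable def coverNumber {W : Type*} (H : SimpleGraph W) : ℕ :=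
  sInf {m | ∃ S : Set W, S.Finite ∧ S.ncard = m ∧ ∀ e ∈ H.edgeSet, ∃ v ∈ S, v ∈ e}

/-- An `H`-good coloring of `G`: a proper edge coloring with colors in the
positive integers that contains a rainbow copy of `H`, and such that every edge
of color `i` has, for each `1 ≤ j < i`, an adjacent edge of color `j`. -/
def IsHGoodColoring {V W : Type*} (H : SimpleGraph W) (G : SimpleGraph V)
    (c : Sym2 V → ℕ) : Prop :=
  IsProperEdgeColoring G c ∧
  (∀ e ∈ G.edgeSet, 1 ≤ c e) ∧
  HasRainbowCopy G H c ∧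
  ∀ e ∈ G.edgeSet, ∀ j : ℕ, 1 ≤ j → j < c e →
    ∃ e' ∈ G.edgeSet, c e' = j ∧ ∃ v, v ∈ e ∧ v ∈ e'

/-- A graph `G` is `H`-good if it admits an `H`-good coloring. -/
def HGood {V W : Type*} (H : SimpleGraph W) (G : SimpleGraph V) : Prop :=
  ∃ c : Sym2 V → ℕ, IsHGoodColoring H G c

/-!
Fix a vertex cover `S` of `H` and color the `k` edges of `H` bijectively with `1, …, k`. For every
`v ∈ S` and every edge `e` of `H` avoiding `v`, attach to `v` a new leaf by an edge with the color
of `e`. Each `v ∈ S` then sees all `k` colors, each exactly once, and every edge, old or new, has an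
endpoint in `S`; so the coloring is `H`-good, and at most `|S| k` edges were added to the `k` edges
of `H`.
-/

section Coloring

variable {U V W : Type*} {G : SimpleGraph V} {G' : SimpleGraph U} {H : SimpleGraph W}

theorem isProperEdgeColoring_iff {c : Sym2 V → ℕ} :
    IsProperEdgeColoring G c ↔
      ∀ ⦃x y z⦄, G.Adj x y → G.Adj x z → c s(x, y) = c s(x, z) → y = z := by
  constructor
  · intro hc x y z hxy hxz hcolor
    by_contra hyz
    exact hc s(x, y) hxy s(x, z) hxz (fun h => hyz (Sym2.congr_right.1 h))
      ⟨x, Sym2.mem_mk_left x y, Sym2.mem_mk_left x z⟩ hcolor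
  · rintro hc _ h₁ _ h₂ hne ⟨x, ⟨y, rfl⟩, ⟨z, rfl⟩⟩ hcolor
    exact hne (congrArg (fun w => s(x, w)) (hc h₁ h₂ hcolor))

theorem IsProperEdgeColoring.comap {c : Sym2 V → ℕ} (hc : IsProperEdgeColoring G c)
    (f : G' →g G) (hf : Function.Injective f) : IsProperEdgeColoring G' (c ∘ Sym2.map f) := by
  rw [isProperEdgeColoring_iff] at hc ⊢
  exact fun x y z hxy hxz hcolor => hf (hc (f.map_adj hxy) (f.map_adj hxz) hcolor)

theorem hasRainbowCopy_self_of_injOn {c : Sym2 W → ℕ} (hc : Set.InjOn c H.edgeSet) :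
    HasRainbowCopy H H c := by
  refine ⟨Hom.id, Function.injective_id, fun e₁ h₁ e₂ h₂ hcolor => hc h₁ h₂ ?_⟩
  simpa only [Hom.coe_id, Sym2.map_id, id_eq] using hcolor

theorem HasRainbowCopy.map {c : Sym2 V → ℕ} (f : G' →g G) (hf : Function.Injective f)
    (h : HasRainbowCopy G' H (c ∘ Sym2.map f)) : HasRainbowCopy G H c := by
  obtain ⟨g, hg, hrainbow⟩ := h
  refine ⟨f.comp g, hf.comp hg, fun e₁ h₁ e₂ h₂ hcolor => hrainbow e₁ h₁ e₂ h₂ ?_⟩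
  simpa only [Function.comp_apply, Sym2.map_map, Hom.coe_comp] using hcolor

theorem IsHGoodColoring.comap {c : Sym2 V → ℕ} (hc : IsHGoodColoring H G c) (φ : G' ≃g G) :
    IsHGoodColoring H G' (c ∘ Sym2.map φ) := by
  obtain ⟨hproper, hpos, hrainbow, hdom⟩ := hc
  have map_symm_map (e : Sym2 V) : (e.map φ.symm).map φ = e := by
    simp [Sym2.map_map]
  refine ⟨hproper.comap φ.toHom φ.injective, fun e he => hpos _ (φ.map_mem_edgeSet_iff.2 he),
    .map φ.symm.toHom φ.symm.injective ?_, fun e he j hj hjc => ?_⟩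
  · convert hrainbow using 1
    exact funext fun e => congrArg c (map_symm_map e)
  · obtain ⟨e', he', rfl, v, hv, hv'⟩ := hdom _ (φ.map_mem_edgeSet_iff.2 he) j hj hjc
    obtain ⟨u, hu, rfl⟩ := Sym2.mem_map.1 hv
    exact ⟨e'.map φ.symm, φ.symm.map_mem_edgeSet_iff.2 he', congrArg c (map_symm_map e'), u, hu,
      Sym2.mem_map.2 ⟨φ u, hv', φ.symm_apply_apply u⟩⟩

theorem HGood.congr (h : HGood H G) (φ : G ≃g G') : HGood H G' :=
  let ⟨_, hc⟩ := h
  ⟨_, hc.comap φ.symm⟩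

theorem exists_isVertexCover_ncard_eq_coverNumber [Finite W] (H : SimpleGraph W) :
    ∃ S : Set W, H.IsVertexCover S ∧ S.ncard = coverNumber H := by
  obtain ⟨S, -, hcard, hS⟩ := Nat.sInf_mem (s := {m | ∃ S : Set W, S.Finite ∧ S.ncard = m ∧
      ∀ e ∈ H.edgeSet, ∃ v ∈ S, v ∈ e})
    ⟨_, Set.univ, Set.toFinite _, rfl, fun e _ => ⟨e.out.1, trivial, e.out_fst_mem⟩⟩
  refine ⟨S, fun v w hvw => ?_, hcard⟩
  obtain ⟨x, hx, hxe⟩ := hS s(v, w) hvw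
  rcases Sym2.mem_iff.1 hxe with rfl | rfl
  exacts [.inl hx, .inr hx]

end Coloring

section PendantGraph

variable {W : Type*} {H : SimpleGraph W} {S : Set W}

/-- The graph obtained from `H` by attaching to every `v ∈ S` one leaf for each edge of `H` that
avoids `v`. The leaf at `v` for the edge `e` is `Sum.inr (v, e)`; the vertices `Sum.inr (v, e)` for
all other pairs are isolated. -/
def pendantGraph (H : SimpleGraph W) (S : Set W) : SimpleGraph (W ⊕ W × Sym2 W) where
  Adj
    | .inl a, .inl b => H.Adj a b
    | .inl a, .inr (v, e) => a = v ∧ v ∈ S ∧ e ∈ H.edgeSet ∧ v ∉ e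
    | .inr (v, e), .inl a => a = v ∧ v ∈ S ∧ e ∈ H.edgeSet ∧ v ∉ e
    | .inr _, .inr _ => False
  symm := ⟨by
    rintro (a | p) (b | q) h
    exacts [h.symm, h, h, h]⟩
  loopless := ⟨by
    rintro (a | p) h
    exacts [h.ne rfl, h]⟩

/-- The edge of `H` represented by an edge of `pendantGraph H S`: an edge of `H` represents itself,
the pendant edge at the leaf `Sum.inr (v, e)` represents `e`. The value on pairs of leaves is
irrelevant, since these are never edges. -/
def pendantLabel : Sym2 (W ⊕ W × Sym2 W) → Sym2 W :=
  Sym2.lift ⟨fun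
    | .inl a, .inl b => s(a, b)
    | .inl _, .inr (_, e) => e
    | .inr (_, e), .inl _ => e
    | .inr (v, _), .inr (w, _) => s(v, w), by
    rintro (a | p) (b | q)
    exacts [Sym2.eq_swap, rfl, rfl, Sym2.eq_swap]⟩

/-- The edge joining `p.1` to its leaf for the edge `p.2` of `H`. -/
def pendantEdge (p : W × Sym2 W) : Sym2 (W ⊕ W × Sym2 W) :=
  s(.inl p.1, .inr p)

/-- The inclusion of `H` into `pendantGraph H S`. -/
def pendantGraphInl (H : SimpleGraph W) (S : Set W) : H →g pendantGraph H S where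
  toFun := Sum.inl
  map_rel' h := h

theorem pendantLabel_map_inl (e : Sym2 W) : pendantLabel (e.map Sum.inl) = e := by
  induction e with | _ a b
  rfl

theorem pendantLabel_mem_edgeSet {e : Sym2 (W ⊕ W × Sym2 W)}
    (he : e ∈ (pendantGraph H S).edgeSet) : pendantLabel e ∈ H.edgeSet := by
  induction e with | _ x y
  rcases x with a | p <;> rcases y with b | q
  exacts [he, he.2.2.1, he.2.2.1, he.elim]

theorem eq_of_pendantLabel_eq {x y z : W ⊕ W × Sym2 W} (hxy : (pendantGraph H S).Adj x y)
    (hxz : (pendantGraph H S).Adj x z) (h : pendantLabel s(x, y) = pendantLabel s(x, z)) :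
    y = z := by
  rcases x with a | p
  · rcases y with b | ⟨v, e⟩ <;> rcases z with d | ⟨w, f⟩
    · exact congrArg Sum.inl (Sym2.congr_right.1 h)
    · obtain ⟨rfl, -, -, ha⟩ := hxz
      obtain rfl : s(a, b) = f := h
      exact absurd (Sym2.mem_mk_left a b) ha
    · obtain ⟨rfl, -, -, ha⟩ := hxy
      obtain rfl : e = s(a, d) := h
      exact absurd (Sym2.mem_mk_left a d) ha
    · exact congrArg Sum.inr (Prod.ext (hxy.1.symm.trans hxz.1) h)
  · rcases y with b | q <;> rcases z with d | r
    exacts [congrArg Sum.inl (hxy.1.trans hxz.1.symm), hxz.elim, hxy.elim, hxy.elim]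

theorem exists_mem_edgeSet_pendantLabel_eq {v : W} (hv : v ∈ S) {f : Sym2 W}
    (hf : f ∈ H.edgeSet) :
    ∃ e ∈ (pendantGraph H S).edgeSet, pendantLabel e = f ∧ Sum.inl v ∈ e := by
  by_cases hvf : v ∈ f
  · exact ⟨f.map Sum.inl, (pendantGraphInl H S).map_mem_edgeSet hf, pendantLabel_map_inl f,
      Sym2.mem_map.2 ⟨v, hvf, rfl⟩⟩
  · exact ⟨pendantEdge (v, f), ⟨rfl, hv, hf, hvf⟩, rfl, Sym2.mem_mk_left _ _⟩

theorem exists_mem_inl_mem_of_isVertexCover (hS : H.IsVertexCover S)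
    {e : Sym2 (W ⊕ W × Sym2 W)} (he : e ∈ (pendantGraph H S).edgeSet) :
    ∃ v ∈ S, Sum.inl v ∈ e := by
  induction e with | _ x y
  rcases x with a | ⟨v, f⟩ <;> rcases y with b | ⟨w, f⟩
  · rcases hS he with ha | hb
    exacts [⟨a, ha, Sym2.mem_mk_left _ _⟩, ⟨b, hb, Sym2.mem_mk_right _ _⟩]
  · obtain ⟨rfl, ha, -⟩ := he
    exact ⟨a, ha, Sym2.mem_mk_left _ _⟩
  · obtain ⟨rfl, hb, -⟩ := he
    exact ⟨b, hb, Sym2.mem_mk_right _ _⟩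
  · exact he.elim

theorem isHGoodColoring_pendantGraph (hS : H.IsVertexCover S) {c : Sym2 W → ℕ} {k : ℕ}
    (hc : Set.BijOn c H.edgeSet (Set.Icc 1 k)) :
    IsHGoodColoring H (pendantGraph H S) (c ∘ pendantLabel) := by
  have hrange {e} (he : e ∈ (pendantGraph H S).edgeSet) : c (pendantLabel e) ∈ Set.Icc 1 k :=
    hc.mapsTo (pendantLabel_mem_edgeSet he)
  refine ⟨isProperEdgeColoring_iff.2 fun x y z hxy hxz hcolor => ?_, fun e he => (hrange he).1,
    .map (pendantGraphInl H S) Sum.inl_injective ?_, fun e he j hj hjc => ?_⟩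
  · exact eq_of_pendantLabel_eq hxy hxz
      (hc.injOn (pendantLabel_mem_edgeSet hxy) (pendantLabel_mem_edgeSet hxz) hcolor)
  · convert hasRainbowCopy_self_of_injOn hc.injOn using 1
    exact funext fun e => congrArg c (pendantLabel_map_inl e)
  · obtain ⟨v, hv, hve⟩ := exists_mem_inl_mem_of_isVertexCover hS he
    obtain ⟨f, hf, rfl⟩ := hc.surjOn ⟨hj, hjc.le.trans (hrange he).2⟩
    obtain ⟨e', he', hlabel, hve'⟩ := exists_mem_edgeSet_pendantLabel_eq hv hf
    exact ⟨e', he', congrArg c hlabel, .inl v, hve, hve'⟩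

theorem hGood_pendantGraph (hS : H.IsVertexCover S) (hH : H.edgeSet.Finite) :
    HGood H (pendantGraph H S) := by
  have hcard : H.edgeSet.encard = (Set.Icc 1 H.edgeSet.ncard).encard := by
    rw [← Finset.coe_Icc, Set.encard_coe_eq_coe_finsetCard, Nat.card_Icc, add_tsub_cancel_right,
      hH.cast_ncard_eq]
  obtain ⟨c, hc⟩ := hH.exists_bijOn_of_encard_eq hcard
  exact ⟨_, isHGoodColoring_pendantGraph hS hc⟩

theorem edgeSet_pendantGraph_subset :
    (pendantGraph H S).edgeSet ⊆ Sym2.map Sum.inl '' H.edgeSet ∪ pendantEdge '' S ×ˢ H.edgeSet := by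
  intro e he
  induction e with | _ x y
  rcases x with a | p <;> rcases y with b | q
  · exact .inl ⟨s(a, b), he, rfl⟩
  · obtain ⟨rfl, hS, hH, -⟩ := he
    exact .inr ⟨q, ⟨hS, hH⟩, rfl⟩
  · obtain ⟨rfl, hS, hH, -⟩ := he
    exact .inr ⟨p, ⟨hS, hH⟩, Sym2.eq_swap⟩
  · exact he.elim

theorem ncard_edgeSet_pendantGraph_le (hS : S.Finite) (hH : H.edgeSet.Finite) :
    (pendantGraph H S).edgeSet.ncard ≤ (S.ncard + 1) * H.edgeSet.ncard :=
  have hSH : (S ×ˢ H.edgeSet).Finite := hS.prod hH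
  calc
    (pendantGraph H S).edgeSet.ncard
      ≤ (Sym2.map Sum.inl '' H.edgeSet ∪ pendantEdge '' S ×ˢ H.edgeSet).ncard :=
        Set.ncard_le_ncard edgeSet_pendantGraph_subset ((hH.image _).union (hSH.image _))
    _ ≤ (Sym2.map Sum.inl '' H.edgeSet).ncard + (pendantEdge '' S ×ˢ H.edgeSet).ncard :=
        Set.ncard_union_le _ _
    _ ≤ H.edgeSet.ncard + (S ×ˢ H.edgeSet).ncard :=
        add_le_add (Set.ncard_image_le hH) (Set.ncard_image_le hSH)
    _ = (S.ncard + 1) * H.edgeSet.ncard := by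
        rw [Set.ncard_prod]
        ring

end PendantGraph

theorem stmt_13_general {W : Type*} [Finite W] (H : SimpleGraph W) :
    ∃ (n : ℕ) (G : SimpleGraph (Fin n)), HGood H G ∧
      G.edgeSet.ncard ≤ (coverNumber H + 1) * H.edgeSet.ncard := by
  obtain ⟨S, hS, hcard⟩ := exists_isVertexCover_ncard_eq_coverNumber H
  have := Fintype.ofFinite (W ⊕ W × Sym2 W)
  let φ := (pendantGraph H S).overFinIso rfl
  refine ⟨_, (pendantGraph H S).overFin rfl,
    (hGood_pendantGraph hS (Set.toFinite _)).congr φ, ?_⟩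
  rw [← Set.ncard_congr' φ.mapEdgeSet, ← hcard]
  exact ncard_edgeSet_pendantGraph_le (Set.toFinite _) (Set.toFinite _)

theorem stmt_13 {W : Type} [Fintype W] (H : SimpleGraph W)
    (hk : 1 ≤ H.edgeSet.ncard)
    (hiso : ∀ v : W, ∃ w, H.Adj v w) :
    ∃ (n : ℕ) (G : SimpleGraph (Fin n)), HGood H G ∧
      G.edgeSet.ncard ≤ (coverNumber H + 1) * H.edgeSet.ncard :=
  stmt_13_general H
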